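/- arXiv:2305.04886 — 16 statements merged into one kernel-verified Lean document; each statement's English description precedes it below -/
import Mathlib

section
/- Let A be an n-by-n reciprocal matrix and let v and w be positive n-vectors. Then |w_i/w_j − a_ij| = |v_i/v_j − a_ij| for all indices i, j (i.e., |D(A,w)| = |D(A,v)| entrywise) if and only if there exists a positive real constant c such that v = c·w. -/
/-- An n-by-n positive matrix is reciprocal if `A j i = 1 / A i j` for all `i, j`. -/
def Reciprocal {n : ℕ} (A : Matrix (Fin n) (Fin n) ℝ) : Prop :=
  (∀ i j, 0 < A i j) ∧ ∀ i j, A j i = 1 / A i j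

theorem aux_eq (x y a : ℝ) (hx : 0 < x) (hy : 0 < y) (ha : 0 < a)
    (h1 : |x - a| = |y - a|) (h2 : |x⁻¹ - a⁻¹| = |y⁻¹ - a⁻¹|) : x = y := by
  rcases abs_eq_abs.1 h1 with h | h
  · linarith
  rcases abs_eq_abs.1 h2 with h' | h'
  · exact inv_injective (by linarith)
  have hs : x + y = 2 * a := by linarith
  have h3 : x⁻¹ + y⁻¹ = 2 * a⁻¹ := by linarith
  field_simp at h3
  have h5 : x * y = a * a := by
    have : (y + x) * a = 2 * (a * a) := by rw [add_comm, hs]; ring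
    nlinarith
  have h4 : (x - y) ^ 2 = 0 := by
    have : (x - y) ^ 2 = (x + y) ^ 2 - 4 * (x * y) := by ring
    rw [this, hs, h5]; ring
  have := pow_eq_zero_iff (two_ne_zero) |>.1 h4
  linarith

/-- |D(A,w)| = |D(A,v)| entrywise iff v is a positive scalar multiple of w. -/
theorem stmt_0 {n : ℕ} (A : Matrix (Fin n) (Fin n) ℝ) (hA : Reciprocal A)
    (v w : Fin n → ℝ) (hv : ∀ i, 0 < v i) (hw : ∀ i, 0 < w i) :
    (∀ i j, |w i / w j - A i j| = |v i / v j - A i j|) ↔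
      ∃ c : ℝ, 0 < c ∧ v = fun i => c * w i := by
  constructor
  · intro h
    have key : ∀ i j, w i / w j = v i / v j := by
      intro i j
      refine aux_eq _ _ (A i j) (div_pos (hw i) (hw j)) (div_pos (hv i) (hv j)) (hA.1 i j)
        (h i j) ?_
      have := h j i
      rw [hA.2 i j] at this
      simpa [inv_div] using this
    rcases Nat.eq_zero_or_pos n with hn | hn
    · subst hn
      exact ⟨1, one_pos, funext fun i => i.elim0⟩
    · let k : Fin n := ⟨0, hn⟩
      refine ⟨v k / w k, div_pos (hv k) (hw k), funext fun i => ?_⟩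
      have h1 := key i k
      have h2 := (hw k).ne'
      have h3 := (hv k).ne'
      rw [div_eq_div_iff h2 h3] at h1
      field_simp
      linarith
  · rintro ⟨c, hc, rfl⟩ i j
    simp only [mul_div_mul_left _ _ hc.ne']
end

section
/- Let a, w1, w2, v1, v2 be positive real numbers. Then the two equalities |a − w1/w2| = |a − v1/v2| and |1/a − w2/w1| = |1/a − v2/v1| hold simultaneously if and only if w1/w2 = v1/v2. -/
/-- The key pairwise identity: for positive reals, the two absolute-value equalities
hold simultaneously iff the ratios agree. -/
theorem stmt_1 (a w1 w2 v1 v2 : ℝ) (ha : 0 < a) (hw1 : 0 < w1) (hw2 : 0 < w2)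
    (hv1 : 0 < v1) (hv2 : 0 < v2) :
    (|a - w1 / w2| = |a - v1 / v2| ∧ |1 / a - w2 / w1| = |1 / a - v2 / v1|) ↔
      w1 / w2 = v1 / v2 := by
  have hx : 0 < w1 / w2 := div_pos hw1 hw2
  have hy : 0 < v1 / v2 := div_pos hv1 hv2
  rw [← inv_div w1 w2, ← inv_div v1 v2]
  generalize w1 / w2 = x at *
  generalize v1 / v2 = y at *
  constructor
  · rintro ⟨h1, h2⟩
    rcases abs_eq_abs.mp h1 with h1 | h1
    · linarith
    rcases abs_eq_abs.mp h2 with h2 | h2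
    · exact inv_injective (by linarith)
    have h3 : 2 * (x * y) = a * (x + y) := by
      field_simp at h2
      linarith
    have h4 : x + y = 2 * a := by linarith
    have h5 : (x - y) ^ 2 = 0 := by
      have h6 : a = (x + y) / 2 := by linarith
      rw [h6] at h3
      linarith
    have := pow_eq_zero_iff (two_ne_zero) |>.mp h5
    linarith
  · rintro rfl
    exact ⟨rfl, rfl⟩
end

section
/- Let A be an n-by-n reciprocal matrix, let w be a positive n-vector efficient for A, and let D be an n-by-n diagonal matrix with positive diagonal entries d_1, …, d_n. Then the matrix DAD^{-1} (with (i,j) entry d_i·a_ij/d_j) is reciprocal and the vector Dw (with i-th entry d_i·w_i) is efficient for DAD^{-1}. -/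
/-- A positive vector `w` is efficient for a reciprocal matrix `A` if every positive
vector `v` with `|v i / v j - A i j| ≤ |w i / w j - A i j|` entrywise is a positive
scalar multiple of `w`. -/
def Efficient {n : ℕ} (A : Matrix (Fin n) (Fin n) ℝ) (w : Fin n → ℝ) : Prop :=
  ∀ v : Fin n → ℝ, (∀ i, 0 < v i) →
    (∀ i j, |v i / v j - A i j| ≤ |w i / w j - A i j|) →
    ∃ c : ℝ, 0 < c ∧ v = fun i => c * w i

/-- Efficiency is preserved by positive diagonal similarity. -/
theorem stmt_2 {n : ℕ} (A : Matrix (Fin n) (Fin n) ℝ) (hA : Reciprocal A)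
    (w : Fin n → ℝ) (hw : ∀ i, 0 < w i) (hweff : Efficient A w)
    (d : Fin n → ℝ) (hd : ∀ i, 0 < d i) :
    Reciprocal (fun i j => d i * A i j / d j) ∧
      Efficient (fun i j => d i * A i j / d j) (fun i => d i * w i) := by
  refine ⟨⟨fun i j => ?_, fun i j => ?_⟩, fun v hv h => ?_⟩
  · exact div_pos (mul_pos (hd i) (hA.1 i j)) (hd j)
  · show d j * A j i / d i = 1 / (d i * A i j / d j)
    rw [hA.2 i j]
    have h1 := (hd i).ne'
    have h2 := (hd j).ne'
    have h3 := (hA.1 i j).ne'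
    field_simp
  · obtain ⟨c, hc, hcv⟩ := hweff (fun i => v i / d i) (fun i => div_pos (hv i) (hd i)) (by
      intro i j
      have h1 := (hd i).ne'
      have h2 := (hd j).ne'
      have h3 := (hv j).ne'
      have h4 := (hw j).ne'
      have hp : 0 < d i / d j := div_pos (hd i) (hd j)
      have key := h i j
      have e1 : v i / v j - d i * A i j / d j
          = (d i / d j) * (v i / d i / (v j / d j) - A i j) := by
        field_simp
      have e2 : d i * w i / (d j * w j) - d i * A i j / d j
          = (d i / d j) * (w i / w j - A i j) := by
        field_simp
      simp only [e1, e2, abs_mul, abs_of_pos hp] at key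
      exact le_of_mul_le_mul_left key hp)
    refine ⟨c, hc, funext fun i => ?_⟩
    have e : v i / d i = c * w i := congrFun hcv i
    rw [div_eq_iff (hd i).ne'] at e
    rw [e]
    ring
end

section
/- Let A be an n-by-n reciprocal matrix and w a positive n-vector. Then w is efficient for A if and only if the digraph G(A,w) is strongly connected, i.e., for every ordered pair of distinct vertices i, j there is a directed path from i to j in G(A,w). -/
/-- The edge relation of the digraph `G(A,w)`: there is a directed edge `i → j`
(for `i ≠ j`) exactly when `w i / w j ≥ A i j`. -/
def GEdge {n : ℕ} (A : Matrix (Fin n) (Fin n) ℝ) (w : Fin n → ℝ) (i j : Fin n) : Prop :=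
  i ≠ j ∧ A i j ≤ w i / w j

/-- Blanquero–Carrizosa–Conde: `w` is efficient for `A` iff `G(A,w)` is strongly
connected (for every ordered pair of distinct vertices there is a directed path). -/
theorem stmt_4 {n : ℕ} (A : Matrix (Fin n) (Fin n) ℝ) (hA : Reciprocal A)
    (w : Fin n → ℝ) (hw : ∀ i, 0 < w i) :
    Efficient A w ↔ ∀ i j : Fin n, i ≠ j → Relation.TransGen (GEdge A w) i j := by
  obtain ⟨hpos, hrec⟩ := hA
  constructor
  · intro hE i j hij
    by_contra hno
    have hev : ∀ᶠ t in nhdsWithin (1 : ℝ) (Set.Ioi 1), ∀ k l : Fin n,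
        w k / w l < A k l → t * (w k / w l) < A k l := by
      rw [Filter.eventually_all]
      intro k
      rw [Filter.eventually_all]
      intro l
      by_cases h : w k / w l < A k l
      · have hc : Filter.Tendsto (fun t : ℝ => t * (w k / w l)) (nhds 1)
            (nhds (1 * (w k / w l))) :=
          (continuous_id.mul continuous_const).tendsto 1
        rw [one_mul] at hc
        have h2 := (hc.mono_left (nhdsWithin_le_nhds (s := Set.Ioi 1))).eventually_lt_const h
        filter_upwards [h2] with t ht _ using ht
      · exact Filter.Eventually.of_forall fun t h' => absurd h' h
    obtain ⟨t, ht, ht1⟩ := (hev.and self_mem_nhdsWithin).exists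
    have ht1 : (1 : ℝ) < t := ht1
    have ht0 : 0 < t := by linarith
    classical
    let S : Fin n → Prop := fun k => Relation.ReflTransGen (GEdge A w) i k
    have hiS : S i := Relation.ReflTransGen.refl
    have hjS : ¬ S j := by
      intro h
      rcases Relation.reflTransGen_iff_eq_or_transGen.1 h with h | h
      · exact hij h.symm
      · exact hno h
    have hcut : ∀ k l, S k → ¬ S l → w k / w l < A k l := by
      intro k l hk hl
      by_contra h
      push Not at h
      refine hl (Relation.ReflTransGen.tail hk ⟨?_, h⟩)
      rintro rfl
      exact hl hk
    obtain ⟨c, hc, hv⟩ := hE (fun k => if S k then t * w k else w k)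
      (by
        intro k
        have := hw k
        split_ifs <;> positivity)
      (by
        intro k l
        have hk := hw k
        have hl := hw l
        split_ifs with h1 h2 h2
        · rw [mul_div_mul_left _ _ ht0.ne']
        · have h := hcut k l h1 h2
          have h3 := ht k l h
          have h4 : 0 < w k / w l := by positivity
          rw [mul_div_assoc, abs_of_neg (by linarith), abs_of_neg (by linarith)]
          nlinarith
        · have h := hcut l k h2 h1
          have h3 := ht l k h
          have h5 : A k l ≤ w k / (t * w l) := by
            rw [hrec l k]
            have : w k / (t * w l) = 1 / (t * (w l / w k)) := by field_simp
            rw [this]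
            exact one_div_le_one_div_of_le (by positivity) h3.le
          have h6 : w k / (t * w l) ≤ w k / w l := by
            apply div_le_div_of_nonneg_left hk.le hl
            nlinarith
          rw [abs_of_nonneg (by linarith), abs_of_nonneg (by linarith)]
          linarith
        · exact le_rfl)
    have e1 := congrFun hv i
    have e2 := congrFun hv j
    simp only [hiS, hjS, if_true, if_false] at e1 e2
    have e1' := mul_right_cancel₀ (hw i).ne' e1
    have e2' : (1 : ℝ) = c := mul_right_cancel₀ (hw j).ne' (by linarith)
    linarith
  · intro hG v hv hle
    have hedge : ∀ i j, GEdge A w i j → v i / w i ≤ v j / w j := by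
      rintro i j ⟨_, h⟩
      have h1 := hle i j
      rw [abs_of_nonneg (by linarith : 0 ≤ w i / w j - A i j)] at h1
      have h2 : v i / v j ≤ w i / w j := by linarith [le_abs_self (v i / v j - A i j)]
      rw [div_le_div_iff₀ (hv j) (hw j)] at h2
      rw [div_le_div_iff₀ (hw i) (hw j)]
      linarith
    have htr : ∀ i j, Relation.TransGen (GEdge A w) i j → v i / w i ≤ v j / w j := by
      intro i j h
      induction h with
      | single h => exact hedge _ _ h
      | tail _ h ih => exact ih.trans (hedge _ _ h)
    have hall : ∀ i j, v i / w i = v j / w j := by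
      intro i j
      by_cases h : i = j
      · rw [h]
      · exact le_antisymm (htr _ _ (hG i j h)) (htr _ _ (hG j i (Ne.symm h)))
    rcases isEmpty_or_nonempty (Fin n) with he | ⟨⟨i⟩⟩
    · exact ⟨1, one_pos, funext fun k => he.elim k⟩
    · refine ⟨v i / w i, div_pos (hv i) (hw i), funext fun k => ?_⟩
      rw [hall i k, div_mul_cancel₀ _ (hw k).ne']
end

section
/- Let A be an n-by-n reciprocal matrix. The set of positive n-vectors that are efficient for A is a closed subset of ℝ^n; equivalently, the set of positive n-vectors that are not efficient for A is open in the set of positive n-vectors. -/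
theorem not_efficient_iff {n : ℕ} (A : Matrix (Fin n) (Fin n) ℝ) (hA : Reciprocal A)
    (w : Fin n → ℝ) (hw : ∀ i, 0 < w i) :
    ¬ Efficient A w ↔ ∃ S : Set (Fin n), S.Nonempty ∧ Sᶜ.Nonempty ∧
      ∀ i j, i ∈ S → j ∉ S → w i < A i j * w j := by
  constructor
  · intro h
    unfold Efficient at h
    push Not at h
    obtain ⟨v, hv, hle, hne⟩ := h
    have hn : Nonempty (Fin n) := by
      by_contra hn
      rw [not_nonempty_iff] at hn
      exact hne 1 one_pos (Subsingleton.elim _ _)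
    obtain ⟨m, hm⟩ := Finite.exists_max (fun i => v i / w i)
    refine ⟨{i | v i / w i = v m / w m}, ⟨m, rfl⟩, ?_, ?_⟩
    · by_contra hS
      rw [Set.not_nonempty_iff_eq_empty, Set.compl_empty_iff] at hS
      apply hne (v m / w m) (div_pos (hv m) (hw m))
      funext i
      have : i ∈ {i | v i / w i = v m / w m} := by rw [hS]; trivial
      rw [← Set.mem_ofPred_eq.mp this, div_mul_cancel₀ _ (hw i).ne']
    · intro i j hi hj
      have hlt : v j / w j < v i / w i := by
        rw [Set.mem_ofPred_eq.mp hi]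
        exact lt_of_le_of_ne (hm j) hj
      have h2 : w i / w j < v i / v j := by
        rw [div_lt_div_iff₀ (hw j) (hw i)] at hlt
        rw [div_lt_div_iff₀ (hw j) (hv j)]
        linarith
      rw [← div_lt_iff₀ (hw j)]
      by_contra hc
      push Not at hc
      have := hle i j
      rw [abs_of_nonneg (by linarith), abs_of_nonneg (by linarith)] at this
      linarith
  · rintro ⟨S, ⟨p, hp⟩, ⟨q, hq⟩, hS⟩ heff
    classical
    have hev : ∀ᶠ t in nhdsWithin (1 : ℝ) (Set.Ioi 1),
        ∀ i j, i ∈ S → j ∉ S → t * w i < A i j * w j := by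
      rw [Filter.eventually_all]; intro i
      rw [Filter.eventually_all]; intro j
      by_cases hi : i ∈ S
      · by_cases hj : j ∉ S
        · have : ∀ᶠ t in nhds (1 : ℝ), t * w i < A i j * w j := by
            apply ContinuousAt.eventually_lt (by fun_prop) (by fun_prop)
            simpa using hS i j hi hj
          filter_upwards [nhdsWithin_le_nhds this] with t ht _ _ using ht
        · simp [hj]
      · simp [hi]
    obtain ⟨t, ht, ht1⟩ := (hev.and self_mem_nhdsWithin).exists
    have ht1 : 1 < t := ht1
    have ht0 : 0 < t := by linarith
    obtain ⟨c, hc, h⟩ := heff (fun i => if i ∈ S then t * w i else w i) (by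
      intro i
      split_ifs
      · exact mul_pos ht0 (hw i)
      · exact hw i) (by
      intro i j
      have hi := hw i
      have hj := hw j
      split_ifs with h1 h2 h2
      · rw [mul_div_mul_left _ _ ht0.ne']
      · have h3 := ht i j h1 h2
        rw [← div_lt_iff₀ hj] at h3
        have h4 : w i / w j ≤ t * w i / w j := by
          gcongr
          nlinarith
        rw [abs_of_nonpos (by linarith), abs_of_nonpos (by linarith)]
        linarith
      · have h3 := ht j i h2 h1
        have hp := hA.1 j i
        have h5 : A i j ≤ w i / (t * w j) := by
          rw [hA.2 j i, div_le_div_iff₀ hp (mul_pos ht0 hj)]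
          linarith
        have h4 : w i / (t * w j) ≤ w i / w j := by
          gcongr
          nlinarith
        rw [abs_of_nonneg (by linarith), abs_of_nonneg (by linarith)]
        linarith
      · exact le_rfl)
    have e1 := congrFun h p
    have e2 := congrFun h q
    have hq' : q ∉ S := hq
    simp only [hp, hq', if_true, if_false] at e1 e2
    have := hw p
    have := hw q
    have c1 : c = t := (mul_right_cancel₀ (hw p).ne' e1).symm
    have c2 : c = 1 := mul_right_cancel₀ (hw q).ne' (by linarith)
    linarith

/-- The set of efficient vectors for `A` is closed within the set of positive vectors;
equivalently, the set of positive vectors that are not efficient for `A` is open. -/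
theorem stmt_5 {n : ℕ} (A : Matrix (Fin n) (Fin n) ℝ) (hA : Reciprocal A) :
    IsClosed {w : {v : Fin n → ℝ // ∀ i, 0 < v i} | Efficient A w.val} ∧
      IsOpen {w : Fin n → ℝ | (∀ i, 0 < w i) ∧ ¬ Efficient A w} := by
  have hopen : IsOpen {w : Fin n → ℝ | (∀ i, 0 < w i) ∧ ¬ Efficient A w} := by
    have : {w : Fin n → ℝ | (∀ i, 0 < w i) ∧ ¬ Efficient A w} =
        (⋂ i, {w : Fin n → ℝ | 0 < w i}) ∩
        ⋃ S : Set (Fin n), ⋃ _ : S.Nonempty ∧ Sᶜ.Nonempty,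
          ⋂ i, ⋂ j, ⋂ _ : i ∈ S, ⋂ _ : j ∉ S, {w : Fin n → ℝ | w i < A i j * w j} := by
      ext w
      simp only [Set.mem_ofPred_eq, Set.mem_inter_iff, Set.mem_iInter, Set.mem_iUnion,
        exists_prop, and_assoc]
      exact and_congr_right fun hw => not_efficient_iff A hA w hw
    rw [this]
    refine (isOpen_iInter_of_finite fun i => isOpen_lt (by fun_prop) (by fun_prop)).inter ?_
    refine isOpen_iUnion fun S => isOpen_iUnion fun _ => ?_
    refine isOpen_iInter_of_finite fun i => isOpen_iInter_of_finite fun j =>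
      isOpen_iInter_of_finite fun _ => isOpen_iInter_of_finite fun _ =>
      isOpen_lt (by fun_prop) (by fun_prop)
  refine ⟨?_, hopen⟩
  rw [← isOpen_compl_iff]
  convert hopen.preimage (continuous_subtype_val (p := fun v : Fin n → ℝ => ∀ i, 0 < v i)) using 1
  ext w
  simpa using fun _ => w.2
end

section
/- Let n ≥ 3, let A be an n-by-n reciprocal matrix, let A(n) be the (n−1)-by-(n−1) principal submatrix of A obtained by deleting the last row and column, and let w = (w_1, …, w_{n−1}) be a positive vector efficient for A(n). For a positive real x, the n-vector (w_1, …, w_{n−1}, x) is efficient for A if and only if min_{1 ≤ i ≤ n−1} w_i/a_{in} ≤ x ≤ max_{1 ≤ i ≤ n−1} w_i/a_{in}. -/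
theorem aux_improve {n : ℕ} (hn : 2 ≤ n) (A : Matrix (Fin (n + 1)) (Fin (n + 1)) ℝ)
    (hA : Reciprocal A) (w : Fin n → ℝ) (hw : ∀ i, 0 < w i)
    (x : ℝ) (hx : 0 < x) (hE : Efficient A (Fin.snoc w x)) (z : ℝ) (hz : 0 < z)
    (h : ∀ i : Fin n, (x ≤ z ∧ z ≤ w i / A i.castSucc (Fin.last n)) ∨
      (w i / A i.castSucc (Fin.last n) ≤ z ∧ z ≤ x)) : z = x := by
  have key : ∀ i : Fin n,
      |w i / z - A i.castSucc (Fin.last n)| ≤ |w i / x - A i.castSucc (Fin.last n)| ∧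
      |z / w i - A (Fin.last n) i.castSucc| ≤ |x / w i - A (Fin.last n) i.castSucc| := by
    intro i
    have ha := hA.1 i.castSucc (Fin.last n)
    have hwi := hw i
    have hi := h i
    rw [hA.2 i.castSucc (Fin.last n)]
    generalize A i.castSucc (Fin.last n) = a at *
    rcases hi with ⟨h1, h2⟩ | ⟨h1, h2⟩
    · rw [le_div_iff₀ ha] at h2
      have e1 : a ≤ w i / z := by rw [le_div_iff₀ hz]; linarith
      have e2 : w i / z ≤ w i / x := by gcongr
      have e3 : z / w i ≤ 1 / a := by rw [div_le_div_iff₀ hwi ha]; linarith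
      have e4 : x / w i ≤ z / w i := by gcongr
      constructor
      · rw [abs_of_nonneg (by linarith), abs_of_nonneg (by linarith)]; linarith
      · rw [abs_of_nonpos (by linarith), abs_of_nonpos (by linarith)]; linarith
    · rw [div_le_iff₀ ha] at h1
      have e1 : w i / z ≤ a := by rw [div_le_iff₀ hz]; linarith
      have e2 : w i / x ≤ w i / z := by gcongr
      have e3 : 1 / a ≤ z / w i := by rw [div_le_div_iff₀ ha hwi]; linarith
      have e4 : z / w i ≤ x / w i := by gcongr
      constructor
      · rw [abs_of_nonpos (by linarith), abs_of_nonpos (by linarith)]; linarith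
      · rw [abs_of_nonneg (by linarith), abs_of_nonneg (by linarith)]; linarith
  obtain ⟨c, hc, hv⟩ := hE (Fin.snoc w z) (by
      intro i
      refine Fin.lastCases ?_ (fun i => ?_) i
      · simpa using hz
      · simpa using hw i) (by
      intro i j
      refine Fin.lastCases ?_ (fun i => ?_) i
      · refine Fin.lastCases ?_ (fun j => ?_) j
        · simp [hz.ne', hx.ne']
        · simpa using (key j).2
      · refine Fin.lastCases ?_ (fun j => ?_) j
        · simpa using (key i).1
        · simp)
  have h0 := congrFun hv (Fin.castSucc ⟨0, by omega⟩)
  have h1 := congrFun hv (Fin.last n)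
  simp only [Fin.snoc_castSucc, Fin.snoc_last] at h0 h1
  have hw0 := hw ⟨0, by omega⟩
  have : c = 1 := by
    have : (c - 1) * w ⟨0, by omega⟩ = 0 := by linarith
    rcases mul_eq_zero.1 this with h | h <;> linarith
  rw [h1, this, one_mul]

/-- Extension theorem: for an `(n+1)`-by-`(n+1)` reciprocal matrix `A` (with `n + 1 ≥ 3`)
and a vector `w` efficient for the principal submatrix obtained by deleting the last row
and column, the extended vector `(w, x)` is efficient for `A` iff
`min_i w i / A i n ≤ x ≤ max_i w i / A i n`. -/
theorem stmt_6 {n : ℕ} (hn : 2 ≤ n) (A : Matrix (Fin (n + 1)) (Fin (n + 1)) ℝ)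
    (hA : Reciprocal A) (w : Fin n → ℝ) (hw : ∀ i, 0 < w i)
    (hweff : Efficient (fun i j : Fin n => A i.castSucc j.castSucc) w)
    (x : ℝ) (hx : 0 < x) :
    Efficient A (Fin.snoc w x) ↔
      (Finset.univ.inf' ⟨⟨0, by omega⟩, Finset.mem_univ _⟩
          (fun i : Fin n => w i / A i.castSucc (Fin.last n)) ≤ x ∧
        x ≤ Finset.univ.sup' ⟨⟨0, by omega⟩, Finset.mem_univ _⟩
          (fun i : Fin n => w i / A i.castSucc (Fin.last n))) := by
  have hpos : ∀ i : Fin n, 0 < w i / A i.castSucc (Fin.last n) :=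
    fun i => div_pos (hw i) (hA.1 _ _)
  constructor
  · intro hE
    constructor
    · by_contra! hlt
      have := aux_improve hn A hA w hw x hx hE _ (hx.trans hlt)
        (fun i => Or.inl ⟨hlt.le, Finset.inf'_le _ (Finset.mem_univ i)⟩)
      linarith
    · by_contra! hlt
      have := aux_improve hn A hA w hw x hx hE _
        ((hpos ⟨0, by omega⟩).trans_le (Finset.le_sup'
          (fun i : Fin n => w i / A i.castSucc (Fin.last n)) (Finset.mem_univ _)))
        (fun i => Or.inr ⟨Finset.le_sup'
          (fun i : Fin n => w i / A i.castSucc (Fin.last n)) (Finset.mem_univ i), hlt.le⟩)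
      linarith
  · rintro ⟨h1, h2⟩ v hv hd
    obtain ⟨i, -, hi⟩ := (Finset.inf'_le_iff _).1 h1
    obtain ⟨j, -, hj⟩ := (Finset.le_sup'_iff _).1 h2
    obtain ⟨c, hc, hcv⟩ := hweff (fun k => v k.castSucc) (fun k => hv _) (fun k l => by
      simpa using hd k.castSucc l.castSucc)
    have hvk : ∀ k : Fin n, v k.castSucc = c * w k := fun k => congrFun hcv k
    refine ⟨c, hc, ?_⟩
    have hy := hv (Fin.last n)
    have hlast : v (Fin.last n) = c * x := by
      apply le_antisymm
      · have hdi := hd (Fin.last n) i.castSucc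
        have ha := hA.1 i.castSucc (Fin.last n)
        have hwi := hw i
        rw [hA.2 i.castSucc (Fin.last n)] at hdi
        simp only [Fin.snoc_castSucc, Fin.snoc_last, hvk] at hdi
        rw [div_le_iff₀ ha] at hi
        have e : 1 / A i.castSucc (Fin.last n) ≤ x / w i := by
          rw [div_le_div_iff₀ ha hwi]; linarith
        rw [abs_of_nonneg (a := x / w i - _) (by linarith)] at hdi
        have h3 := (le_abs_self _).trans hdi
        have h4 : v (Fin.last n) / (c * w i) ≤ x / w i := by linarith
        rw [div_le_div_iff₀ (by positivity) hwi] at h4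
        have h5 : v (Fin.last n) * w i ≤ (c * x) * w i := by linarith
        exact le_of_mul_le_mul_right h5 hwi
      · have hdj := hd j.castSucc (Fin.last n)
        have ha := hA.1 j.castSucc (Fin.last n)
        have hwj := hw j
        simp only [Fin.snoc_castSucc, Fin.snoc_last, hvk] at hdj
        rw [le_div_iff₀ ha] at hj
        have e : A j.castSucc (Fin.last n) ≤ w j / x := by
          rw [le_div_iff₀ hx]; linarith
        rw [abs_of_nonneg (a := w j / x - _) (by linarith)] at hdj
        have h3 := (le_abs_self _).trans hdj
        have h4 : c * w j / v (Fin.last n) ≤ w j / x := by linarith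
        rw [div_le_div_iff₀ hy hx] at h4
        have h5 : (c * x) * w j ≤ v (Fin.last n) * w j := by linarith
        exact le_of_mul_le_mul_right h5 hwj
    funext k
    refine Fin.lastCases ?_ (fun k => ?_) k
    · simpa using hlast
    · simpa using hvk k
end

section
/- Let A be an n-by-n reciprocal matrix. Then every column of A is efficient for A; that is, for each j ∈ {1, …, n}, the vector a_j with i-th entry a_ij is efficient for A. -/
/-- Every column of a reciprocal matrix is efficient for it. -/
theorem stmt_7 {n : ℕ} (A : Matrix (Fin n) (Fin n) ℝ) (hA : Reciprocal A)
    (j : Fin n) : Efficient A (fun i => A i j) := by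
  intro v hv h
  have h1 : A j j = 1 := by
    have hp := hA.1 j j
    have hr := hA.2 j j
    rw [eq_div_iff hp.ne'] at hr
    nlinarith
  refine ⟨v j, hv j, ?_⟩
  funext i
  have h2 := h i j
  simp only [h1, div_one, sub_self, abs_zero] at h2
  have h3 : v i / v j = A i j := sub_eq_zero.mp (abs_nonpos_iff.mp h2)
  have h4 := hv j
  show v i = v j * A i j
  rw [← h3]
  field_simp
end

section
/- Let A be an n-by-n reciprocal matrix and let S be any nonempty subset of {1, …, n} with s = |S|. Then the geometric mean of the columns of A indexed by S, i.e., the vector w with w_i = (∏_{j∈S} a_ij)^{1/s}, is efficient for A. -/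
theorem sum_antisymm_zero {n : ℕ} (b : Fin n → Fin n → ℝ) (hb : ∀ i j, b j i = - b i j)
    (T : Finset (Fin n)) : ∑ i ∈ T, ∑ k ∈ T, b i k = 0 := by
  have h : ∑ i ∈ T, ∑ k ∈ T, b i k = - ∑ i ∈ T, ∑ k ∈ T, b i k := by
    conv_lhs => rw [Finset.sum_comm]
    rw [← Finset.sum_neg_distrib]
    refine Finset.sum_congr rfl fun i _ => ?_
    rw [← Finset.sum_neg_distrib]
    exact Finset.sum_congr rfl fun k _ => hb i k
  linarith

theorem no_cut {n : ℕ} (b : Fin n → Fin n → ℝ) (hb : ∀ i j, b j i = - b i j)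
    (S : Finset (Fin n)) (hS : S.Nonempty) (x : Fin n → ℝ)
    (hx : ∀ i, S.card * x i = ∑ k ∈ S, b i k) (M : Fin n → Prop)
    (hM : ∀ i j, M i → ¬ M j → x i - x j < b i j) (p q : Fin n) (hp : M p) (hq : ¬ M q) :
    False := by
  classical
  have hs : (0 : ℝ) < S.card := by exact_mod_cast hS.card_pos
  have h0 : ∑ i ∈ S, x i = 0 := by
    have h1 : (S.card : ℝ) * ∑ i ∈ S, x i = 0 := by
      rw [Finset.mul_sum, ← sum_antisymm_zero b hb S]
      exact Finset.sum_congr rfl fun i _ => hx i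
    rcases mul_eq_zero.1 h1 with h | h
    · linarith
    · exact h
  by_cases c1 : ∀ i ∈ S, M i
  · have h := Finset.sum_lt_sum_of_nonempty hS (fun i hi => hM i q (c1 i hi) hq)
    rw [Finset.sum_sub_distrib, h0, Finset.sum_const, nsmul_eq_mul, hx] at h
    have h2 : ∑ i ∈ S, b i q = - ∑ i ∈ S, b q i := by
      rw [← Finset.sum_neg_distrib]
      exact Finset.sum_congr rfl fun i _ => hb q i
    linarith
  by_cases c2 : ∀ i ∈ S, ¬ M i
  · have h := Finset.sum_lt_sum_of_nonempty hS (fun i hi => hM p i hp (c2 i hi))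
    rw [Finset.sum_sub_distrib, h0, Finset.sum_const, nsmul_eq_mul, hx] at h
    linarith
  push Not at c1 c2
  obtain ⟨j0, hj0, hj0'⟩ := c1
  obtain ⟨i0, hi0, hi0'⟩ := c2
  set S1 := S.filter M with hS1
  set S2 := S.filter (fun i => ¬ M i) with hS2
  have n1 : S1.Nonempty := ⟨i0, by simp [hS1, hi0, hi0']⟩
  have n2 : S2.Nonempty := ⟨j0, by simp [hS2, hj0, hj0']⟩
  have h : ∑ i ∈ S1, ∑ j ∈ S2, (x i - x j) < ∑ i ∈ S1, ∑ j ∈ S2, b i j := by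
    refine Finset.sum_lt_sum_of_nonempty n1 fun i hi => Finset.sum_lt_sum_of_nonempty n2 fun j hj => ?_
    exact hM i j (Finset.mem_filter.1 hi).2 (Finset.mem_filter.1 hj).2
  have hc : (S1.card : ℝ) + S2.card = S.card := by
    exact_mod_cast Finset.card_filter_add_card_filter_not (s := S) M
  have hsum : ∑ i ∈ S1, x i + ∑ i ∈ S2, x i = 0 := by
    rw [← h0]; exact Finset.sum_filter_add_sum_filter_not S M x
  have hX : (S.card : ℝ) * ∑ i ∈ S1, x i = ∑ i ∈ S1, ∑ j ∈ S2, b i j := by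
    rw [Finset.mul_sum, ← zero_add (∑ i ∈ S1, ∑ j ∈ S2, b i j), ← sum_antisymm_zero b hb S1,
      ← Finset.sum_add_distrib]
    refine Finset.sum_congr rfl fun i _ => ?_
    rw [hx]; exact (Finset.sum_filter_add_sum_filter_not S M _).symm
  simp only [Finset.sum_sub_distrib, Finset.sum_const, nsmul_eq_mul, ← Finset.mul_sum] at h
  rw [← hX, ← hc] at h
  have e : ∑ i ∈ S2, x i = - ∑ i ∈ S1, x i := by linarith
  rw [e] at h
  linarith

/-- The geometric mean of any nonempty collection of distinct columns of a reciprocal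
matrix is efficient for it. -/
theorem stmt_9 {n : ℕ} (A : Matrix (Fin n) (Fin n) ℝ) (hA : Reciprocal A)
    (S : Finset (Fin n)) (hS : S.Nonempty) :
    Efficient A (fun i => (∏ j ∈ S, A i j) ^ ((1 : ℝ) / S.card)) := by
  intro v hv hle
  obtain ⟨hpos, hrec⟩ := hA
  set w : Fin n → ℝ := fun i => (∏ j ∈ S, A i j) ^ ((1 : ℝ) / S.card) with hw
  have hP : ∀ i, 0 < ∏ j ∈ S, A i j := fun i => Finset.prod_pos fun j _ => hpos i j
  have hwp : ∀ i, 0 < w i := fun i => Real.rpow_pos_of_pos (hP i) _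
  have hs : (S.card : ℝ) ≠ 0 := by exact_mod_cast hS.card_pos.ne'
  obtain ⟨m, _, hm⟩ := Finset.exists_max_image Finset.univ (fun i => v i / w i)
    ⟨hS.choose, Finset.mem_univ _⟩
  have key : ∀ q, v q / w q = v m / w m := by
    by_contra hcon
    push Not at hcon
    obtain ⟨q, hq⟩ := hcon
    refine no_cut (fun i j => Real.log (A i j)) (fun i j => ?_) S hS (fun i => Real.log (w i))
      (fun i => ?_) (fun i => v i / w i = v m / w m) (fun i j hi hj => ?_) m q rfl hq
    · simp only [hrec i j, one_div, Real.log_inv]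
    · simp only [hw]
      rw [Real.log_rpow (hP i), Real.log_prod (fun j _ => (hpos i j).ne')]
      field_simp
    · have hlt : v j / w j < v i / w i := by
        rw [hi]; exact lt_of_le_of_ne (hm j (Finset.mem_univ _)) hj
      have hlt2 : w i / w j < v i / v j := by
        rw [div_lt_div_iff₀ (hwp _) (hwp _)] at hlt
        rw [div_lt_div_iff₀ (hwp _) (hv _)]
        linarith
      have hlt3 : w i / w j < A i j := by
        by_contra hge
        push Not at hge
        have h1 := hle i j
        change |v i / v j - A i j| ≤ |w i / w j - A i j| at h1
        rw [abs_of_nonneg (by linarith), abs_of_nonneg (by linarith)] at h1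
        linarith
      change Real.log (w i) - Real.log (w j) < Real.log (A i j)
      rw [← Real.log_div (hwp i).ne' (hwp j).ne']
      exact Real.log_lt_log (div_pos (hwp i) (hwp j)) hlt3
  refine ⟨v m / w m, div_pos (hv m) (hwp m), ?_⟩
  funext i
  rw [← key i, div_mul_cancel₀ _ (hwp i).ne']
end

section
/- Let A be an n-by-n reciprocal matrix. Then the geometric mean of all n columns of A, i.e., the vector w with w_i = (∏_{j=1}^n a_ij)^{1/n}, is efficient for A. -/
lemma key_pair (r s a : ℝ) (hr : 0 < r) (hs : 0 < s) (ha : 0 < a)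
    (h1 : |r - a| ≤ |s - a|) (h2 : |1 / r - 1 / a| ≤ |1 / s - 1 / a|) :
    (Real.log r - Real.log s) * (Real.log r + Real.log s - 2 * Real.log a) ≤ 0 := by
  have h1' := sq_le_sq.mpr h1
  have h2' := sq_le_sq.mpr h2
  have e1 : (r - s) * (r + s - 2 * a) ≤ 0 := by nlinarith
  have e2 : (s - r) * ((r + s) * a - 2 * (r * s)) ≤ 0 := by
    have e : (s - r) * ((r + s) * a - 2 * (r * s)) =
        ((1 / r - 1 / a) ^ 2 - (1 / s - 1 / a) ^ 2) * (r ^ 2 * s ^ 2 * a) := by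
      field_simp
      ring
    rw [e]
    exact mul_nonpos_of_nonpos_of_nonneg (by linarith) (by positivity)
  have l1 : Real.log r + Real.log s = Real.log (r * s) :=
    (Real.log_mul hr.ne' hs.ne').symm
  have l2 : 2 * Real.log a = Real.log (a ^ 2) := by simp
  rw [l1, l2]
  rcases lt_trichotomy r s with h | h | h
  · have f1 : 0 ≤ r + s - 2 * a := by
      by_contra hc
      push Not at hc
      nlinarith [mul_pos_of_neg_of_neg (sub_neg.mpr h) hc]
    have f2 : (r + s) * a - 2 * (r * s) ≤ 0 := by
      by_contra hc
      push Not at hc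
      nlinarith [mul_pos (sub_pos.mpr h) hc]
    have f3 : a ^ 2 ≤ r * s := by nlinarith [mul_nonneg f1 ha.le]
    have g1 := Real.log_le_log hr h.le
    have g2 := Real.log_le_log (by positivity) f3
    exact mul_nonpos_of_nonpos_of_nonneg (by linarith) (by linarith)
  · subst h; simp
  · have f1 : r + s - 2 * a ≤ 0 := by
      by_contra hc
      push Not at hc
      nlinarith [mul_pos (sub_pos.mpr h) hc]
    have f2 : 0 ≤ (r + s) * a - 2 * (r * s) := by
      by_contra hc
      push Not at hc
      nlinarith [mul_pos_of_neg_of_neg (sub_neg.mpr h) hc]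
    have f3 : r * s ≤ a ^ 2 := by nlinarith [mul_nonneg (neg_nonneg.mpr f1) ha.le]
    have g1 := Real.log_le_log hs h.le
    have g2 := Real.log_le_log (by positivity) f3
    exact mul_nonpos_of_nonneg_of_nonpos (by linarith) (by linarith)

lemma const_of_ls {n : ℕ} (b : Fin n → Fin n → ℝ) (hb : ∀ i j, b j i = - b i j)
    (x y : Fin n → ℝ) (hx : ∀ i, n * x i = ∑ j, b i j)
    (h : ∀ i j, ((y i - y j) - (x i - x j)) * ((y i - y j) + (x i - x j) - 2 * b i j) ≤ 0)
    (i j : Fin n) : y i - x i = y j - x j := by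
  have hn : (n : ℝ) ≠ 0 := by
    have := i.pos
    positivity
  have hS : ∑ i, ∑ j, b i j = 0 := by
    have h1 : ∑ i, ∑ j, b i j = ∑ i, ∑ j, b j i := Finset.sum_comm
    have h2 : ∑ i, ∑ j, b j i = - ∑ i, ∑ j, b i j := by
      rw [← Finset.sum_neg_distrib]
      refine Finset.sum_congr rfl fun i _ => ?_
      rw [← Finset.sum_neg_distrib]
      exact Finset.sum_congr rfl fun j _ => hb i j
    linarith
  have hX : ∑ i, x i = 0 := by
    have : (n : ℝ) * ∑ i, x i = 0 := by rw [Finset.mul_sum, ← hS]; simp_rw [hx]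
    simpa [hn] using this
  have hR : ∀ i, ∑ j, (x i - x j - b i j) = 0 := by
    intro i
    rw [Finset.sum_sub_distrib, Finset.sum_sub_distrib, hX, ← hx i]
    simp
  have hT : ∑ i, ∑ j, (y i - x i) * (x i - x j - b i j) = 0 := by
    simp_rw [← Finset.mul_sum, hR]; simp
  have hT2 : ∑ i, ∑ j, (y j - x j) * (x i - x j - b i j) = 0 := by
    rw [Finset.sum_comm, ← neg_eq_zero, ← hT, ← Finset.sum_neg_distrib]
    refine Finset.sum_congr rfl fun i _ => ?_
    rw [← Finset.sum_neg_distrib]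
    refine Finset.sum_congr rfl fun j _ => ?_
    rw [hb i j]; ring
  have hQ : ∑ i, ∑ j, ((y i - x i) - (y j - x j)) ^ 2 ≤ 0 := by
    have : ∑ i, ∑ j, ((y i - x i) - (y j - x j)) ^ 2
        = ∑ i, ∑ j, (((y i - y j) - (x i - x j)) * ((y i - y j) + (x i - x j) - 2 * b i j)
          - 2 * ((y i - x i) * (x i - x j - b i j)) + 2 * ((y j - x j) * (x i - x j - b i j))) := by
      refine Finset.sum_congr rfl fun i _ => Finset.sum_congr rfl fun j _ => ?_
      ring
    rw [this]
    have e : ∀ f g k : Fin n → Fin n → ℝ, ∑ i, ∑ j, (f i j - 2 * g i j + 2 * k i j) =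
        ∑ i, ∑ j, f i j - 2 * ∑ i, ∑ j, g i j + 2 * ∑ i, ∑ j, k i j := by
      intro f g k
      simp only [Finset.sum_add_distrib, Finset.sum_sub_distrib, Finset.mul_sum]
    rw [e, hT, hT2]
    have := Finset.sum_nonpos fun i (_ : i ∈ Finset.univ) =>
      Finset.sum_nonpos fun j (_ : j ∈ Finset.univ) => h i j
    linarith
  have h1 := Finset.single_le_sum (f := fun i => ∑ j, ((y i - x i) - (y j - x j)) ^ 2)
    (fun i _ => Finset.sum_nonneg fun j _ => sq_nonneg _) (Finset.mem_univ i)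
  have h2 := Finset.single_le_sum (f := fun j => ((y i - x i) - (y j - x j)) ^ 2)
    (fun j _ => sq_nonneg _) (Finset.mem_univ j)
  have h3 : ((y i - x i) - (y j - x j)) ^ 2 = 0 :=
    le_antisymm (by linarith) (sq_nonneg _)
  exact sub_eq_zero.mp (pow_eq_zero_iff (two_ne_zero) |>.mp h3)

/-- The geometric mean of all columns of a reciprocal matrix is efficient for it. -/
theorem stmt_10 {n : ℕ} (A : Matrix (Fin n) (Fin n) ℝ) (hA : Reciprocal A) :
    Efficient A (fun i => (∏ j, A i j) ^ ((1 : ℝ) / n)) := by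
  obtain ⟨hpos, hrec⟩ := hA
  intro v hv h
  rcases Nat.eq_zero_or_pos n with rfl | hn
  · exact ⟨1, one_pos, funext fun i => i.elim0⟩
  have hn' : (n : ℝ) ≠ 0 := by positivity
  have hP : ∀ i, 0 < ∏ j, A i j := fun i => Finset.prod_pos fun j _ => hpos i j
  have hlog : ∀ i, n * Real.log ((∏ j, A i j) ^ ((1 : ℝ) / n)) = ∑ j, Real.log (A i j) := by
    intro i
    rw [Real.log_rpow (hP i), Real.log_prod fun j _ => (hpos i j).ne']
    field_simp
  have hw : ∀ i, 0 < (∏ j, A i j) ^ ((1 : ℝ) / n) := fun i => Real.rpow_pos_of_pos (hP i) _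
  generalize hwd : (fun i => (∏ j, A i j) ^ ((1 : ℝ) / n)) = w at h ⊢
  have hwi : ∀ i, (∏ j, A i j) ^ ((1 : ℝ) / n) = w i := fun i => congrFun hwd i
  simp only [hwi] at hlog hw
  have hc := const_of_ls (fun i j => Real.log (A i j))
    (fun i j => by simp only [hrec i j, one_div, Real.log_inv])
    (fun i => Real.log (w i)) (fun i => Real.log (v i)) hlog (by
      intro i j
      have h2 := h j i
      rw [hrec i j, ← one_div_div (v i) (v j), ← one_div_div (w i) (w j)] at h2
      have := key_pair (v i / v j) (w i / w j) (A i j) (div_pos (hv i) (hv j))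
        (div_pos (hw i) (hw j)) (hpos i j) (h i j) h2
      rwa [Real.log_div (hv i).ne' (hv j).ne', Real.log_div (hw i).ne' (hw j).ne'] at this)
  refine ⟨v ⟨0, hn⟩ / w ⟨0, hn⟩, div_pos (hv _) (hw _), funext fun i => ?_⟩
  have := hc i ⟨0, hn⟩
  rw [← Real.log_div (hv _).ne' (hw _).ne', ← Real.log_div (hv _).ne' (hw _).ne'] at this
  have := Real.log_injOn_pos (div_pos (hv _) (hw _)) (div_pos (hv _) (hw _)) this
  rw [← this]
  have := (hw i).ne'
  field_simp
end

section
/- Let n ≥ 3 and x > 0, and let Z_n(x) be the n-by-n reciprocal matrix with all entries equal to 1 except entry (1,n) equal to x and entry (n,1) equal to 1/x. A positive n-vector w = (w_1, …, w_n) is efficient for Z_n(x) if and only if either (w_n ≤ w_i ≤ w_1 ≤ x·w_n for all i = 2, …, n−1) or (w_n ≥ w_i ≥ w_1 ≥ x·w_n for all i = 2, …, n−1). -/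
open Filter Topology in
/-- If no edge enters the nonempty proper set `S`, then `w` is not efficient. -/
lemma exists_edge_of_efficient {n : ℕ} (A : Matrix (Fin n) (Fin n) ℝ)
    (hpos : ∀ i j, 0 < A i j) (hrec : ∀ i j, A j i = 1 / A i j)
    (w : Fin n → ℝ) (hw : ∀ i, 0 < w i) (he : Efficient A w)
    (S : Fin n → Prop) (p q : Fin n) (hp : S p) (hq : ¬ S q) :
    ∃ i j, ¬ S i ∧ S j ∧ A i j * w j ≤ w i := by
  classical
  by_contra hcon
  push Not at hcon
  have hev : ∀ᶠ t in 𝓝[<] (1 : ℝ), ∀ i j, ¬ S i → S j → w i < t * (A i j * w j) := by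
    rw [eventually_all]
    intro i
    rw [eventually_all]
    intro j
    by_cases h : ¬ S i ∧ S j
    · have hlt := hcon i j h.1 h.2
      have hc : Tendsto (fun t : ℝ => t * (A i j * w j)) (𝓝[<] 1) (𝓝 (1 * (A i j * w j))) :=
        ((continuous_id.mul continuous_const).tendsto (1 : ℝ)).mono_left nhdsWithin_le_nhds
      have := hc.eventually (lt_mem_nhds (show w i < 1 * (A i j * w j) by linarith))
      filter_upwards [this] with t ht _ _ using ht
    · exact Eventually.of_forall fun t h1 h2 => absurd ⟨h1, h2⟩ h
  have hev2 : ∀ᶠ t in 𝓝[<] (1 : ℝ), t < 1 := eventually_mem_nhdsWithin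
  have hev3 : ∀ᶠ t in 𝓝[<] (1 : ℝ), 0 < t :=
    (lt_mem_nhds (show (0 : ℝ) < 1 by norm_num)).filter_mono nhdsWithin_le_nhds
  obtain ⟨t, ht, ht1, ht0⟩ := (hev.and (hev2.and hev3)).exists
  obtain ⟨c, hc, hv⟩ := he (fun i => if S i then t * w i else w i)
    (fun i => by
      try dsimp only
      split_ifs
      · exact mul_pos ht0 (hw i)
      · exact hw i)
    (fun i j => by
      try dsimp only
      have hwi := hw i
      have hwj := hw j
      by_cases hi : S i <;> by_cases hj : S j <;> simp only [hi, hj, if_true, if_false]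
      · rw [mul_div_mul_left _ _ ht0.ne']
      · have h := ht j i hj hi
        have hA := hpos j i
        rw [hrec j i]
        have h1 : 1 / A j i ≤ t * w i / w j := by
          rw [div_le_div_iff₀ hA hwj]; linarith
        have h2 : t * w i / w j ≤ w i / w j := by
          gcongr; nlinarith
        rw [abs_of_nonneg (by linarith), abs_of_nonneg (by linarith)]
        linarith
      · have h := ht i j hi hj
        have h1 : w i / (t * w j) ≤ A i j := by
          rw [div_le_iff₀ (by positivity)]; linarith
        have h2 : w i / w j ≤ w i / (t * w j) := by
          gcongr; nlinarith
        rw [abs_of_nonpos (by linarith), abs_of_nonpos (by linarith)]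
        linarith
      · exact le_refl _)
  have h1 := congrFun hv p
  have h2 := congrFun hv q
  simp only [hp, hq, if_true, if_false] at h1 h2
  have e1 : t = c := mul_right_cancel₀ (hw p).ne' h1
  have e2 : (1 : ℝ) = c := mul_right_cancel₀ (hw q).ne' (by linarith)
  linarith

/-- Along an edge `i → j` of the digraph, the ratio of `v` to `w` does not decrease. -/
lemma ratio_le_of_edge {a vi vj wi wj : ℝ} (hvj : 0 < vj) (hwj : 0 < wj)
    (h : |vi / vj - a| ≤ |wi / wj - a|) (he : a * wj ≤ wi) : vi * wj ≤ wi * vj := by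
  have h1 : a ≤ wi / wj := by rwa [le_div_iff₀ hwj]
  rw [abs_of_nonneg (by linarith : 0 ≤ wi / wj - a)] at h
  have h2 : vi / vj ≤ wi / wj := by linarith [le_abs_self (vi / vj - a)]
  rwa [div_le_div_iff₀ hvj hwj] at h2

/-- Characterization of the efficient vectors for the simple perturbed consistent
matrix `Z_n(x)`: all entries `1` except the `(1,n)` entry, which is `x`, and the
`(n,1)` entry, which is `1/x`. -/
theorem stmt_11 {n : ℕ} (hn : 3 ≤ n) (x : ℝ) (hx : 0 < x)
    (Z : Matrix (Fin n) (Fin n) ℝ)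
    (hZ : Z = fun i j =>
      if i.val = 0 ∧ j.val = n - 1 then x
      else if i.val = n - 1 ∧ j.val = 0 then 1 / x
      else 1)
    (w : Fin n → ℝ) (hw : ∀ i, 0 < w i) :
    Efficient Z w ↔
      ((∀ i : Fin n, 0 < i.val → i.val < n - 1 →
          w ⟨n - 1, by omega⟩ ≤ w i ∧ w i ≤ w ⟨0, by omega⟩) ∧
        w ⟨n - 1, by omega⟩ ≤ w ⟨0, by omega⟩ ∧
        w ⟨0, by omega⟩ ≤ x * w ⟨n - 1, by omega⟩) ∨
      ((∀ i : Fin n, 0 < i.val → i.val < n - 1 →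
          w i ≤ w ⟨n - 1, by omega⟩ ∧ w ⟨0, by omega⟩ ≤ w i) ∧
        w ⟨0, by omega⟩ ≤ w ⟨n - 1, by omega⟩ ∧
        x * w ⟨n - 1, by omega⟩ ≤ w ⟨0, by omega⟩) := by
  have hZpos : ∀ i j, 0 < Z i j := by
    intro i j
    rw [hZ]; dsimp only
    split_ifs <;> positivity
  have hZrec : ∀ i j, Z j i = 1 / Z i j := by
    intro i j
    rw [hZ]; dsimp only
    split_ifs <;> first | omega | simp
  obtain ⟨f, hf⟩ : ∃ f : Fin n, f = ⟨0, by omega⟩ := ⟨_, rfl⟩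
  obtain ⟨l, hl⟩ : ∃ l : Fin n, l = ⟨n - 1, by omega⟩ := ⟨_, rfl⟩
  obtain ⟨m, hm⟩ : ∃ m : Fin n, m = ⟨1, by omega⟩ := ⟨_, rfl⟩
  rw [← hf, ← hl]
  have hcase : ∀ i : Fin n, i = f ∨ i = l ∨ (0 < i.val ∧ i.val < n - 1) := by
    intro i
    rw [hf, hl, Fin.ext_iff, Fin.ext_iff]
    have := i.isLt
    try dsimp only
    omega
  have hZfl : Z f l = x := by rw [hZ, hf, hl]; simp
  have hZlf : Z l f = 1 / x := by
    rw [hZ, hf, hl]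
    have : n - 1 ≠ 0 := by omega
    simp [this]
  have hZone : ∀ i j, ¬ (i = f ∧ j = l) → ¬ (i = l ∧ j = f) → Z i j = 1 := by
    intro i j h1 h2
    rw [hf, hl, Fin.ext_iff, Fin.ext_iff] at h1 h2
    rw [hZ]; dsimp only at *
    rw [if_neg h1, if_neg h2]
  have hmid : ∀ i : Fin n, (0 < i.val ∧ i.val < n - 1) → i ≠ f ∧ i ≠ l := by
    intro i hi
    rw [hf, hl, Ne, Ne, Fin.ext_iff, Fin.ext_iff]
    try dsimp only
    omega
  have hmm : 0 < m.val ∧ m.val < n - 1 := by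
    rw [hm]; dsimp only; omega
  have hwf := hw f
  have hwl := hw l
  have hZm1 : ∀ i j, (0 < i.val ∧ i.val < n - 1) → Z i j = 1 := fun i j hi =>
    hZone i j (fun h => (hmid i hi).1 h.1) (fun h => (hmid i hi).2 h.1)
  have hZm2 : ∀ i j, (0 < j.val ∧ j.val < n - 1) → Z i j = 1 := fun i j hi =>
    hZone i j (fun h => (hmid j hi).2 h.2) (fun h => (hmid j hi).1 h.2)
  constructor
  · intro he
    have key := exists_edge_of_efficient Z hZpos hZrec w hw he
    have hmax : ∀ i, w i ≤ max (w f) (w l) := by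
      intro p
      by_contra hp
      push Not at hp
      obtain ⟨i, j, hi, hj, hij⟩ := key (fun i => max (w f) (w l) < w i) p f hp
        (not_lt.mpr (le_max_left _ _))
      try dsimp only at hi hj
      rcases hcase j with rfl | rfl | hjm
      · exact absurd (le_max_left _ _) (not_le.mpr hj)
      · exact absurd (le_max_right _ _) (not_le.mpr hj)
      · rw [hZm2 i j hjm] at hij
        exact hi (by linarith)
    have hmin : ∀ i, min (w f) (w l) ≤ w i := by
      intro p
      by_contra hp
      obtain ⟨i, j, hi, hj, hij⟩ := key (fun i => min (w f) (w l) ≤ w i) f p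
        (min_le_left _ _) hp
      try dsimp only at hi hj
      rcases hcase i with rfl | rfl | him
      · exact hi (min_le_left _ _)
      · exact hi (min_le_right _ _)
      · rw [hZm1 i j him] at hij
        exact hi (by linarith)
    rcases le_or_gt (w l) (w f) with hab | hab
    · rw [max_eq_left hab] at hmax
      rw [min_eq_right hab] at hmin
      rcases le_or_gt (w f) (x * w l) with hx1 | hx1
      · exact Or.inl ⟨fun i _ _ => ⟨hmin i, hmax i⟩, hab, hx1⟩
      · rcases hab.eq_or_lt with heq | hlt
        · exact Or.inr ⟨fun i _ _ => ⟨by linarith [hmax i], by linarith [hmin i]⟩,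
            heq.ge, hx1.le⟩
        · exfalso
          obtain ⟨i, j, hi, hj, hij⟩ := key (fun i => w f ≤ w i) f l le_rfl (not_le.mpr hlt)
          try dsimp only at hi hj
          by_cases h1 : i = f ∧ j = l
          · exact hi (by rw [h1.1])
          by_cases h2 : i = l ∧ j = f
          · rw [h2.1, h2.2, hZlf, one_div, inv_mul_le_iff₀ hx] at hij
            linarith
          rw [hZone i j h1 h2] at hij
          exact hi (by linarith)
    · rw [max_eq_right hab.le] at hmax
      rw [min_eq_left hab.le] at hmin
      rcases le_or_gt (x * w l) (w f) with hx1 | hx1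
      · exact Or.inr ⟨fun i _ _ => ⟨hmax i, hmin i⟩, hab.le, hx1⟩
      · exfalso
        obtain ⟨i, j, hi, hj, hij⟩ := key (fun i => w f < w i) l f hab (lt_irrefl _)
        try dsimp only at hi hj
        by_cases h1 : i = f ∧ j = l
        · rw [h1.1, h1.2, hZfl] at hij
          linarith
        by_cases h2 : i = l ∧ j = f
        · rw [h2.2] at hj
          exact lt_irrefl _ hj
        rw [hZone i j h1 h2] at hij
        exact hi (by linarith)
  · intro hor v hv hle
    have hvf := hv f
    have hvl := hv l
    have edge : ∀ i j, Z i j * w j ≤ w i → v i / w i ≤ v j / w j := by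
      intro i j h
      rw [div_le_div_iff₀ (hw i) (hw j)]
      have := ratio_le_of_edge (hv j) (hw j) (hle i j) h
      linarith
    have hall : ∀ i, v i / w i = v f / w f := by
      rcases hor with ⟨h, -, hx1⟩ | ⟨h, -, hx1⟩
      · have e1 : ∀ i : Fin n, (0 < i.val ∧ i.val < n - 1) → v f / w f ≤ v i / w i :=
          fun i hi => edge f i (by rw [hZm2 f i hi]; linarith [h i hi.1 hi.2])
        have e2 : ∀ i : Fin n, (0 < i.val ∧ i.val < n - 1) → v i / w i ≤ v l / w l :=
          fun i hi => edge i l (by rw [hZm1 i l hi]; linarith [h i hi.1 hi.2])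
        have e3 : v l / w l ≤ v f / w f :=
          edge l f (by rw [hZlf, one_div, inv_mul_le_iff₀ hx]; exact hx1)
        intro i
        rcases hcase i with rfl | rfl | him
        · rfl
        · exact le_antisymm e3 ((e1 m hmm).trans (e2 m hmm))
        · exact le_antisymm ((e2 i him).trans e3) (e1 i him)
      · have e1 : ∀ i : Fin n, (0 < i.val ∧ i.val < n - 1) → v i / w i ≤ v f / w f :=
          fun i hi => edge i f (by rw [hZm1 i f hi]; linarith [h i hi.1 hi.2])
        have e2 : ∀ i : Fin n, (0 < i.val ∧ i.val < n - 1) → v l / w l ≤ v i / w i :=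
          fun i hi => edge l i (by rw [hZm2 l i hi]; linarith [h i hi.1 hi.2])
        have e3 : v f / w f ≤ v l / w l :=
          edge f l (by rw [hZfl]; exact hx1)
        intro i
        rcases hcase i with rfl | rfl | him
        · rfl
        · exact le_antisymm ((e2 m hmm).trans (e1 m hmm)) e3
        · exact le_antisymm (e1 i him) (e3.trans (e2 i him))
    refine ⟨v f / w f, div_pos hvf hwf, ?_⟩
    funext i
    rw [← hall i, div_mul_cancel₀ _ (hw i).ne']
end

section
/- Let A be the 3-by-3 reciprocal matrix with rows (1, 1, 3/2), (1, 1, 1), (2/3, 1, 1). A positive 3-vector (w_1, w_2, w_3) is efficient for A if and only if w_3 ≤ w_2 ≤ w_1 ≤ (3/2)·w_3. -/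
theorem abs_between {p q a : ℝ} (h : (p ≤ q ∧ q ≤ a) ∨ (a ≤ q ∧ q ≤ p)) :
    |q - a| ≤ |p - a| := by
  rcases h with ⟨h1, h2⟩ | ⟨h1, h2⟩
  · rw [abs_of_nonpos (by linarith), abs_of_nonpos (by linarith)]; linarith
  · rw [abs_of_nonneg (by linarith), abs_of_nonneg (by linarith)]; linarith

/-- Moving one coordinate towards all its targets contradicts efficiency. -/
theorem not_eff {n : ℕ} (A : Matrix (Fin n) (Fin n) ℝ) (w : Fin n → ℝ) (hw : ∀ i, 0 < w i)
    (hpos : ∀ i j, 0 < A i j) (hrec : ∀ i j, A j i = (A i j)⁻¹)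
    (i k : Fin n) (hk : k ≠ i) (t : ℝ) (ht : 0 < t) (hne : t ≠ w i)
    (h : ∀ j, j ≠ i → (w i ≤ t ∧ t ≤ A i j * w j) ∨ (A i j * w j ≤ t ∧ t ≤ w i)) :
    ¬ Efficient A w := by
  intro he
  obtain ⟨c, hc, hv⟩ := he (Function.update w i t) (by
      intro j
      by_cases hj : j = i
      · subst hj; simpa using ht
      · simpa [hj] using hw j) (by
      intro a b
      by_cases ha : a = i
      · by_cases hb : b = i
        · subst ha; subst hb
          simp [ht.ne', (hw _).ne']
        · subst ha
          rw [Function.update_self, Function.update_of_ne hb]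
          have hwb := hw b
          apply abs_between
          rcases h b hb with ⟨h1, h2⟩ | ⟨h1, h2⟩
          · left
            exact ⟨by gcongr, by rwa [div_le_iff₀ hwb]⟩
          · right
            exact ⟨by rwa [le_div_iff₀ hwb], by gcongr⟩
      · by_cases hb : b = i
        · subst hb
          rw [Function.update_self, Function.update_of_ne ha, hrec b a]
          have hwa := hw a
          have hwb := hw b
          have hA := hpos b a
          apply abs_between
          rcases h a ha with ⟨h1, h2⟩ | ⟨h1, h2⟩
          · right
            refine ⟨?_, by gcongr⟩
            rw [le_div_iff₀ ht, inv_mul_le_iff₀ hA]; exact h2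
          · left
            refine ⟨by gcongr, ?_⟩
            rw [div_le_iff₀ ht, le_inv_mul_iff₀ hA]; exact h1
        · rw [Function.update_of_ne ha, Function.update_of_ne hb])
  have h1 := congrFun hv k
  have h2 := congrFun hv i
  rw [Function.update_of_ne hk] at h1
  rw [Function.update_self] at h2
  have hc1 : c = 1 := by
    have := hw k
    have h3 : (c - 1) * w k = 0 := by linarith
    rcases mul_eq_zero.mp h3 with h4 | h4 <;> linarith
  apply hne
  simp only [hc1, one_mul] at h2
  exact h2

/-- The efficient vectors for the 3-by-3 reciprocal matrix with rows
`(1, 1, 3/2)`, `(1, 1, 1)`, `(2/3, 1, 1)` are exactly the positive vectors with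
`w 2 ≤ w 1 ≤ w 0 ≤ (3/2) * w 2`. -/
theorem stmt_12 (A : Matrix (Fin 3) (Fin 3) ℝ)
    (hA : A = Matrix.of ![![1, 1, 3 / 2], ![1, 1, 1], ![2 / 3, 1, 1]])
    (w : Fin 3 → ℝ) (hw : ∀ i, 0 < w i) :
    Efficient A w ↔ (w 2 ≤ w 1 ∧ w 1 ≤ w 0 ∧ w 0 ≤ (3 / 2) * w 2) := by
  have hpos : ∀ i j, 0 < A i j := by
    intro i j; subst hA; fin_cases i <;> fin_cases j <;> norm_num
  have hrec : ∀ i j, A j i = (A i j)⁻¹ := by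
    intro i j; subst hA; fin_cases i <;> fin_cases j <;> norm_num
  have a01 : A 0 1 = 1 := by subst hA; simp
  have a10 : A 1 0 = 1 := by subst hA; simp
  have a12 : A 1 2 = 1 := by subst hA; simp
  have a21 : A 2 1 = 1 := by subst hA; simp
  have a02 : A 0 2 = 3 / 2 := by subst hA; simp
  have a20 : A 2 0 = 2 / 3 := by subst hA; simp
  have w0 := hw 0
  have w1 := hw 1
  have w2 := hw 2
  constructor
  · intro he
    have inc : ∀ i j k : Fin 3, j ≠ i → k ≠ i → (∀ l, l ≠ i → l = j ∨ l = k) →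
        w i < A i j * w j → w i < A i k * w k → False := by
      intro i j k hj hk hl h1 h2
      have h3 := lt_min h1 h2
      refine not_eff A w hw hpos hrec i j hj _ ((hw i).trans h3) h3.ne' ?_ he
      intro l hli
      left
      rcases hl l hli with rfl | rfl
      · exact ⟨h3.le, min_le_left _ _⟩
      · exact ⟨h3.le, min_le_right _ _⟩
    have dec : ∀ i j k : Fin 3, j ≠ i → k ≠ i → (∀ l, l ≠ i → l = j ∨ l = k) →
        A i j * w j < w i → A i k * w k < w i → False := by
      intro i j k hj hk hl h1 h2
      have h3 := max_lt h1 h2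
      have h4 : 0 < max (A i j * w j) (A i k * w k) :=
        lt_max_of_lt_left (mul_pos (hpos i j) (hw j))
      refine not_eff A w hw hpos hrec i j hj _ h4 h3.ne ?_ he
      intro l hli
      right
      rcases hl l hli with rfl | rfl
      · exact ⟨le_max_left _ _, h3.le⟩
      · exact ⟨le_max_right _ _, h3.le⟩
    have i0 := inc 0 1 2 (by decide) (by decide) (by decide)
    have i1 := inc 1 0 2 (by decide) (by decide) (by decide)
    have i2 := inc 2 0 1 (by decide) (by decide) (by decide)
    have d0 := dec 0 1 2 (by decide) (by decide) (by decide)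
    have d1 := dec 1 0 2 (by decide) (by decide) (by decide)
    have d2 := dec 2 0 1 (by decide) (by decide) (by decide)
    rw [a01, a02] at i0 d0
    rw [a10, a12] at i1 d1
    rw [a20, a21] at i2 d2
    have x1 : w 1 ≤ w 0 := by
      by_contra! hx
      rcases lt_or_ge (w 0) (3 / 2 * w 2) with h | h
      · exact i0 (by linarith) (by linarith)
      · exact d1 (by linarith) (by linarith)
    have y1 : w 2 ≤ w 1 := by
      by_contra! hx
      rcases lt_or_ge (w 0) (3 / 2 * w 2) with h | h
      · exact d2 (by linarith) (by linarith)
      · exact i1 (by linarith) (by linarith)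
    refine ⟨y1, x1, ?_⟩
    by_contra! hx
    rcases lt_or_ge (w 1) (w 0) with h | h
    · exact d0 (by linarith) (by linarith)
    · exact i2 (by linarith) (by linarith)
  · rintro ⟨h21, h10, h02⟩ v hv h
    have v0 := hv 0
    have v1 := hv 1
    have v2 := hv 2
    have e1 := h 0 1
    have e2 := h 1 2
    have e3 := h 0 2
    rw [a01, abs_of_nonneg (a := w 0 / w 1 - 1) (by
      rw [sub_nonneg, le_div_iff₀ w1]; linarith)] at e1
    rw [a12, abs_of_nonneg (a := w 1 / w 2 - 1) (by
      rw [sub_nonneg, le_div_iff₀ w2]; linarith)] at e2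
    rw [a02, abs_of_nonpos (a := w 0 / w 2 - 3 / 2) (by
      rw [sub_nonpos, div_le_iff₀ w2]; linarith)] at e3
    have f1 : v 0 / v 1 ≤ w 0 / w 1 := by linarith [(abs_le.mp e1).2]
    have f2 : v 1 / v 2 ≤ w 1 / w 2 := by linarith [(abs_le.mp e2).2]
    have f3 : w 0 / w 2 ≤ v 0 / v 2 := by linarith [(abs_le.mp e3).1]
    have p1 : v 0 / v 2 = v 0 / v 1 * (v 1 / v 2) := by field_simp
    have p2 : w 0 / w 2 = w 0 / w 1 * (w 1 / w 2) := by field_simp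
    have q1 : 0 < v 0 / v 1 := by positivity
    have q2 : 0 < v 1 / v 2 := by positivity
    have q3 : 0 < w 0 / w 1 := by positivity
    have q4 : 0 < w 1 / w 2 := by positivity
    have g1 : v 0 / v 1 = w 0 / w 1 := by
      apply le_antisymm f1
      by_contra! hlt
      have := mul_lt_mul hlt f2 q2 q3.le
      linarith
    have g2 : v 1 / v 2 = w 1 / w 2 := by
      apply le_antisymm f2
      by_contra! hlt
      have := mul_lt_mul' f1 hlt q2.le q3
      linarith
    rw [div_eq_div_iff v1.ne' w1.ne'] at g1
    rw [div_eq_div_iff v2.ne' w2.ne'] at g2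
    refine ⟨v 1 / w 1, by positivity, ?_⟩
    funext i
    fin_cases i
    · show v 0 = v 1 / w 1 * w 0
      field_simp; linarith
    · show v 1 = v 1 / w 1 * w 1
      field_simp
    · show v 2 = v 1 / w 1 * w 2
      field_simp; linarith
end

section
/- Let A be the 4-by-4 reciprocal matrix with rows (1, 1, 9, 4), (1, 1, 1, 4), (1/9, 1, 1, 1), (1/4, 1/4, 1, 1). Then the vectors w = (4.1, 4.1, 1, 1) and v = (4.2, 4, 3, 1) are both efficient for A, but their Hadamard geometric mean, the vector with i-th entry (w_i·v_i)^{1/2}, is not efficient for A. In particular, for n > 3 the set of efficient vectors of a reciprocal matrix need not be closed under the Hadamard geometric mean. -/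
theorem geo_aux (a t : ℝ) (m : ℝ) (hm : 0 < m) (h : 1.01 * m < a) (_ht : t = 1) :
    |a / 1.01 - m| ≤ |a / t - m| ∧ |1.01 / a - 1 / m| ≤ |t / a - 1 / m| := by
  subst _ht
  have ha : 0 < a := by nlinarith
  have h1 : m ≤ a / 1.01 := by rw [le_div_iff₀ (by norm_num)]; linarith
  have h2 : a / 1.01 ≤ a / 1 := by gcongr; norm_num
  have h3 : 1.01 / a ≤ 1 / m := by rw [div_le_div_iff₀ ha hm]; linarith
  have h4 : 1 / a ≤ 1.01 / a := by gcongr; norm_num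
  constructor
  · rw [abs_of_nonneg (by linarith), abs_of_nonneg (by linarith)]; linarith
  · rw [abs_of_nonpos (by linarith), abs_of_nonpos (by linarith)]; linarith

theorem not_eff_aux (a b c t : ℝ) (ha : 4.04 < a) (hb : 4.04 < b) (hc : 1.01 < c) (ht : t = 1) :
    ¬ Efficient (Matrix.of
      ![![1, 1, 9, 4], ![1, 1, 1, 4], ![1 / 9, 1, 1, 1], ![1 / 4, 1 / 4, 1, 1]])
      ![a, b, c, t] := by
  intro h
  obtain ⟨k, hk, e⟩ := h ![a, b, c, 1.01] (by
    intro i; fin_cases i <;> simp <;> linarith) (by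
    obtain ⟨a1, a2⟩ := geo_aux a t 4 (by norm_num) (by linarith) ht
    obtain ⟨b1, b2⟩ := geo_aux b t 4 (by norm_num) (by linarith) ht
    obtain ⟨c1, c2⟩ := geo_aux c t 1 (by norm_num) (by linarith) ht
    rw [div_one] at c2
    subst ht
    intro i j
    fin_cases i <;> fin_cases j <;>
      first
      | exact le_refl _
      | exact a1
      | exact a2
      | exact b1
      | exact b2
      | exact c1
      | exact c2
      | (simp; norm_num))
  have e0 : a = k * a := congrFun e 0
  have e3 : 1.01 = k * t := congrFun e 3
  subst ht
  norm_num at e3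
  subst e3
  linarith

/-- For the given 4-by-4 reciprocal matrix, `w = (4.1, 4.1, 1, 1)` and
`v = (4.2, 4, 3, 1)` are efficient but their Hadamard geometric mean is not:
the set of efficient vectors need not be closed under the geometric mean. -/
theorem stmt_14 (A : Matrix (Fin 4) (Fin 4) ℝ)
    (hA : A = Matrix.of
      ![![1, 1, 9, 4], ![1, 1, 1, 4], ![1 / 9, 1, 1, 1], ![1 / 4, 1 / 4, 1, 1]])
    (w v : Fin 4 → ℝ)
    (hw : w = ![4.1, 4.1, 1, 1]) (hv : v = ![4.2, 4, 3, 1]) :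
    Efficient A w ∧ Efficient A v ∧
      ¬ Efficient A (fun i => (w i * v i) ^ ((1 : ℝ) / 2)) := by
  subst hA hw hv
  refine ⟨?_, ?_, ?_⟩
  · intro x hx h
    have x0 := hx 0
    have x1 := hx 1
    have x2 := hx 2
    have x3 := hx 3
    have h01 : |x 0 / x 1 - 1| ≤ |4.1 / 4.1 - 1| := h 0 1
    have h23 : |x 2 / x 3 - 1| ≤ |1 / 1 - 1| := h 2 3
    have h02 : |x 0 / x 2 - 9| ≤ |4.1 / 1 - 9| := h 0 2
    have h03 : |x 0 / x 3 - 4| ≤ |4.1 / 1 - 4| := h 0 3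
    norm_num [abs_le] at h01 h23 h02 h03
    have g01 : x 0 / x 1 = 1 := by linarith
    have g23 : x 2 / x 3 = 1 := by linarith
    rw [div_eq_iff x1.ne'] at g01
    rw [div_eq_iff x3.ne'] at g23
    have g02 : 4.1 ≤ x 0 / x 2 := by linarith
    have g03 : x 0 / x 3 ≤ 4.1 := by linarith
    rw [le_div_iff₀ x2] at g02
    rw [div_le_iff₀ x3] at g03
    refine ⟨x 3, x3, ?_⟩
    funext i
    fin_cases i <;> simp <;> linarith
  · intro x hx h
    have x0 := hx 0
    have x1 := hx 1
    have x2 := hx 2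
    have x3 := hx 3
    have h01 : |x 0 / x 1 - 1| ≤ |4.2 / 4 - 1| := h 0 1
    have h12 : |x 1 / x 2 - 1| ≤ |4 / 3 - 1| := h 1 2
    have h02 : |x 0 / x 2 - 9| ≤ |4.2 / 3 - 9| := h 0 2
    have h13 : |x 1 / x 3 - 4| ≤ |4 / 1 - 4| := h 1 3
    norm_num [abs_le] at h01 h12 h02 h13
    have g13 : x 1 / x 3 = 4 := by linarith
    rw [div_eq_iff x3.ne'] at g13
    have g01 : x 0 / x 1 ≤ 1.05 := by linarith
    have g12 : x 1 / x 2 ≤ 4 / 3 := by linarith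
    have g02 : 1.4 ≤ x 0 / x 2 := by linarith
    rw [div_le_iff₀ x1] at g01
    rw [div_le_iff₀ x2] at g12
    rw [le_div_iff₀ x2] at g02
    refine ⟨x 3, x3, ?_⟩
    funext i
    fin_cases i <;> simp <;> linarith
  · have e : (fun i => ((![4.1, 4.1, 1, 1] : Fin 4 → ℝ) i * (![4.2, 4, 3, 1] : Fin 4 → ℝ) i)
        ^ ((1 : ℝ) / 2)) = ![√(4.1 * 4.2), √(4.1 * 4), √(1 * 3), √(1 * 1)] := by
      funext i
      rw [← Real.sqrt_eq_rpow]
      fin_cases i <;> rfl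
    rw [e]
    apply not_eff_aux
    · apply Real.lt_sqrt_of_sq_lt; norm_num
    · apply Real.lt_sqrt_of_sq_lt; norm_num
    · apply Real.lt_sqrt_of_sq_lt; norm_num
    · simp
end

section
/- Let A be an n-by-n consistent reciprocal matrix. Then a positive n-vector w is efficient for A if and only if w is a positive scalar multiple of a column of A; equivalently, w is efficient for A if and only if w_i/w_j = a_ij for all i, j. -/
/-- For a consistent reciprocal matrix, a positive vector is efficient iff it is a
positive scalar multiple of a column, equivalently iff `w i / w j = A i j` for all
`i, j`. -/
theorem stmt_15 {n : ℕ} (hn : 0 < n) (A : Matrix (Fin n) (Fin n) ℝ)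
    (hA : Reciprocal A) (hcons : ∀ i j k, A i j * A j k = A i k)
    (w : Fin n → ℝ) (hw : ∀ i, 0 < w i) :
    (Efficient A w ↔ ∃ c : ℝ, 0 < c ∧ ∃ j : Fin n, w = fun i => c * A i j) ∧
      (Efficient A w ↔ ∀ i j, w i / w j = A i j) := by
  have hratio : ∀ i j k, A i k / A j k = A i j := by
    intro i j k
    rw [div_eq_iff (hA.1 j k).ne', hcons]
  have h1 : Efficient A w → ∃ c : ℝ, 0 < c ∧ ∃ j : Fin n, w = fun i => c * A i j := by
    intro h
    obtain ⟨c, hc, hv⟩ := h (fun i => A i ⟨0, hn⟩) (fun i => hA.1 _ _) (by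
      intro i j
      simp only [hratio, sub_self, abs_zero]
      exact abs_nonneg _)
    refine ⟨c⁻¹, inv_pos.mpr hc, ⟨0, hn⟩, ?_⟩
    funext i
    have hi : A i ⟨0, hn⟩ = c * w i := congrFun hv i
    rw [hi, inv_mul_cancel_left₀ hc.ne']
  have h2 : (∃ c : ℝ, 0 < c ∧ ∃ j : Fin n, w = fun i => c * A i j) →
      ∀ i j, w i / w j = A i j := by
    rintro ⟨c, hc, k, rfl⟩ i j
    simp only [mul_div_mul_left _ _ hc.ne', hratio]
  have h3 : (∀ i j, w i / w j = A i j) → Efficient A w := by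
    intro h v hv hle
    have hz := hw ⟨0, hn⟩
    refine ⟨v ⟨0, hn⟩ / w ⟨0, hn⟩, div_pos (hv _) hz, ?_⟩
    funext i
    have h0 := hle i ⟨0, hn⟩
    rw [h, sub_self, abs_zero] at h0
    have h4 := sub_eq_zero.mp (abs_nonpos_iff.mp h0)
    rw [← h, div_eq_div_iff (hv _).ne' hz.ne'] at h4
    rw [div_mul_eq_mul_div, eq_div_iff hz.ne']
    linarith
  exact ⟨⟨h1, fun h => h3 (h2 h)⟩, ⟨fun h => h2 (h1 h), h3⟩⟩
end

section
/- Let n ≥ 3, let A be an n-by-n reciprocal matrix, let w = (w_1, …, w_{n−1}) be a positive vector such that the digraph G(A(n), w) is strongly connected, and let x > 0 with w_x = (w_1, …, w_{n−1}, x). Then G(A, w_x) is strongly connected if and only if vertex n has at least one outgoing edge and at least one incoming edge in G(A, w_x); equivalently, if and only if among the numbers w_i/x − a_{in}, i = 1, …, n−1, there are both a nonnegative one and a nonpositive one. -/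
/-- A digraph on `Fin n` is strongly connected if for every ordered pair of distinct
vertices there is a directed path from the first to the second. -/
def StronglyConnected {n : ℕ} (e : Fin n → Fin n → Prop) : Prop :=
  ∀ i j : Fin n, i ≠ j → Relation.TransGen e i j

/-- If `G(A(n), w)` is strongly connected then `G(A, (w, x))` is strongly connected iff
the last vertex has an outgoing and an incoming edge; equivalently, iff among the numbers
`w i / x - A i n` there are both a nonnegative one and a nonpositive one. -/
theorem stmt_16 {n : ℕ} (hn : 2 ≤ n) (A : Matrix (Fin (n + 1)) (Fin (n + 1)) ℝ)
    (hA : Reciprocal A) (w : Fin n → ℝ) (hw : ∀ i, 0 < w i)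
    (hconn : StronglyConnected (GEdge (fun i j : Fin n => A i.castSucc j.castSucc) w))
    (x : ℝ) (hx : 0 < x) :
    (StronglyConnected (GEdge A (Fin.snoc w x)) ↔
      ((∃ j : Fin (n + 1), GEdge A (Fin.snoc w x) (Fin.last n) j) ∧
        ∃ j : Fin (n + 1), GEdge A (Fin.snoc w x) j (Fin.last n))) ∧
    (StronglyConnected (GEdge A (Fin.snoc w x)) ↔
      ((∃ i : Fin n, 0 ≤ w i / x - A i.castSucc (Fin.last n)) ∧
        ∃ i : Fin n, w i / x - A i.castSucc (Fin.last n) ≤ 0)) := by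
  have hin : ∀ i : Fin n, GEdge A (Fin.snoc w x) i.castSucc (Fin.last n) ↔
      0 ≤ w i / x - A i.castSucc (Fin.last n) := by
    intro i
    unfold GEdge
    rw [Fin.snoc_castSucc (α := fun _ => ℝ), Fin.snoc_last (α := fun _ => ℝ), sub_nonneg]
    exact ⟨fun h => h.2, fun h => ⟨(Fin.castSucc_lt_last i).ne, h⟩⟩
  have hout : ∀ i : Fin n, GEdge A (Fin.snoc w x) (Fin.last n) i.castSucc ↔
      w i / x - A i.castSucc (Fin.last n) ≤ 0 := by
    intro i
    unfold GEdge
    rw [Fin.snoc_castSucc (α := fun _ => ℝ), Fin.snoc_last (α := fun _ => ℝ), sub_nonpos,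
      hA.2 i.castSucc (Fin.last n)]
    have hp := hA.1 i.castSucc (Fin.last n)
    have hwi := hw i
    have e : (1 / A i.castSucc (Fin.last n) ≤ x / w i) ↔
        w i / x ≤ A i.castSucc (Fin.last n) := by
      rw [div_le_div_iff₀ hp hwi, div_le_iff₀ hx, one_mul, mul_comm x]
    rw [e]
    exact ⟨fun h => h.2, fun h => ⟨(Fin.castSucc_lt_last i).ne', h⟩⟩
  have hlift : ∀ i j : Fin n, i ≠ j →
      Relation.TransGen (GEdge A (Fin.snoc w x)) i.castSucc j.castSucc := by
    intro i j hij
    refine Relation.TransGen.lift Fin.castSucc ?_ _ _ (hconn i j hij)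
    intro a b hab
    refine ⟨fun h => hab.1 (Fin.castSucc_injective n h), ?_⟩
    rw [Fin.snoc_castSucc (α := fun _ => ℝ), Fin.snoc_castSucc (α := fun _ => ℝ)]
    exact hab.2
  have h0 : (⟨0, by omega⟩ : Fin n).castSucc ≠ Fin.last n := (Fin.castSucc_lt_last _).ne
  have h1 : StronglyConnected (GEdge A (Fin.snoc w x)) →
      ((∃ j : Fin (n + 1), GEdge A (Fin.snoc w x) (Fin.last n) j) ∧
        ∃ j : Fin (n + 1), GEdge A (Fin.snoc w x) j (Fin.last n)) := by
    intro h
    constructor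
    · obtain ⟨b, hb, -⟩ := Relation.TransGen.head'_iff.1 (h _ _ h0.symm)
      exact ⟨b, hb⟩
    · obtain ⟨b, -, hb⟩ := Relation.TransGen.tail'_iff.1 (h _ _ h0)
      exact ⟨b, hb⟩
  have h2 : ((∃ j : Fin (n + 1), GEdge A (Fin.snoc w x) (Fin.last n) j) ∧
        ∃ j : Fin (n + 1), GEdge A (Fin.snoc w x) j (Fin.last n)) →
      ((∃ i : Fin n, 0 ≤ w i / x - A i.castSucc (Fin.last n)) ∧
        ∃ i : Fin n, w i / x - A i.castSucc (Fin.last n) ≤ 0) := by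
    rintro ⟨⟨j, hj⟩, ⟨k, hk⟩⟩
    constructor
    · obtain ⟨i, rfl⟩ := Fin.exists_castSucc_eq.2 hk.1
      exact ⟨i, (hin i).1 hk⟩
    · obtain ⟨i, rfl⟩ := Fin.exists_castSucc_eq.2 hj.1.symm
      exact ⟨i, (hout i).1 hj⟩
  have h3 : ((∃ i : Fin n, 0 ≤ w i / x - A i.castSucc (Fin.last n)) ∧
        ∃ i : Fin n, w i / x - A i.castSucc (Fin.last n) ≤ 0) →
      StronglyConnected (GEdge A (Fin.snoc w x)) := by
    rintro ⟨⟨k, hk⟩, ⟨l, hl⟩⟩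
    rw [← hin] at hk
    rw [← hout] at hl
    intro i j hij
    induction i using Fin.lastCases with
    | last =>
      induction j using Fin.lastCases with
      | last => exact absurd rfl hij
      | cast j =>
        by_cases e : l = j
        · subst e; exact .single hl
        · exact .head hl (hlift l j e)
    | cast i =>
      induction j using Fin.lastCases with
      | last =>
        by_cases e : i = k
        · subst e; exact .single hk
        · exact .tail (hlift i k e) hk
      | cast j => exact hlift i j (fun e => hij (congrArg _ e))
  exact ⟨⟨h1, fun h => h3 (h2 h)⟩, ⟨fun h => h2 (h1 h), h3⟩⟩
end

section
/- Let A be an n-by-n reciprocal matrix, let w be a positive n-vector efficient for A such that w_i/w_j ≠ a_ij for all i ≠ j (i.e., the matrix D(A,w) has no zero off-diagonal entries). Then there exists ε > 0 such that every positive n-vector w̃ with |w̃_i − w_i| < ε for all i is also efficient for A. -/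
open Filter Topology Relation

/-- Strong connectivity of the digraph of an efficient vector without ties. -/
lemma strong_of_efficient {n : ℕ} (A : Matrix (Fin n) (Fin n) ℝ) (hA : Reciprocal A)
    (w : Fin n → ℝ) (hw : ∀ i, 0 < w i) (hweff : Efficient A w)
    (hD : ∀ i j, i ≠ j → w i / w j ≠ A i j) (i j : Fin n) :
    ReflTransGen (fun k l => A k l < w k / w l) i j := by
  classical
  by_contra hij
  set R : Fin n → Fin n → Prop := fun k l => A k l < w k / w l with hR
  have hcross : ∀ k l, ReflTransGen R i k → ¬ ReflTransGen R i l → w k / w l < A k l := by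
    intro k l hk hl
    have hne : k ≠ l := by
      rintro rfl
      exact hl hk
    have h1 : ¬ R k l := fun h => hl (hk.tail h)
    exact lt_of_le_of_ne (not_lt.mp h1) (hD k l hne)
  have hev : ∀ᶠ t in 𝓝[>] (1 : ℝ), ∀ k l, w k / w l < A k l → t * (w k / w l) < A k l := by
    rw [eventually_all]
    intro k
    rw [eventually_all]
    intro l
    by_cases h : w k / w l < A k l
    · have hc : Tendsto (fun t : ℝ => t * (w k / w l)) (𝓝[>] 1) (𝓝 (1 * (w k / w l))) :=
        ((continuous_id.mul continuous_const).tendsto 1).mono_left nhdsWithin_le_nhds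
      rw [one_mul] at hc
      filter_upwards [hc.eventually (gt_mem_nhds h)] with t ht _ using ht
    · exact Eventually.of_forall fun t h' => absurd h' h
  obtain ⟨t, ht, ht1⟩ := (hev.and self_mem_nhdsWithin).exists
  have ht1 : (1 : ℝ) < t := ht1
  have ht0 : 0 < t := by linarith
  obtain ⟨c, _, hc⟩ := hweff (fun k => if ReflTransGen R i k then t * w k else w k)
    (by
      intro k
      have := hw k
      split_ifs <;> positivity)
    (by
      intro k l
      have hwk := hw k
      have hwl := hw l
      by_cases hk : ReflTransGen R i k <;> by_cases hl : ReflTransGen R i l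
      · rw [if_pos hk, if_pos hl, mul_div_mul_left _ _ ht0.ne']
      · rw [if_pos hk, if_neg hl, mul_div_assoc]
        have h1 := hcross k l hk hl
        have h2 := ht k l h1
        have h3 : 0 < w k / w l := by positivity
        rw [abs_of_neg (by linarith), abs_of_neg (by linarith)]
        nlinarith
      · rw [if_neg hk, if_pos hl]
        have h1 := hcross l k hl hk
        have h2 := ht l k h1
        have h3 : 0 < w l / w k := by positivity
        have h4 : A k l < w k / (t * w l) := by
          rw [hA.2 l k]
          have : w k / (t * w l) = 1 / (t * (w l / w k)) := by field_simp
          rw [this]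
          exact one_div_lt_one_div_of_lt (by positivity) h2
        have h5 : w k / (t * w l) ≤ w k / w l := by
          apply div_le_div_of_nonneg_left hwk.le hwl
          nlinarith
        rw [abs_of_pos (by linarith), abs_of_pos (by linarith)]
        linarith
      · rw [if_neg hk, if_neg hl])
  have e1 := congrFun hc i
  have e2 := congrFun hc j
  rw [if_pos ReflTransGen.refl] at e1
  rw [if_neg hij] at e2
  have c1 : t = c := mul_right_cancel₀ (hw i).ne' e1
  have c2 : 1 = c := mul_right_cancel₀ (hw j).ne' (by rw [one_mul]; exact e2)
  linarith

/-- A vector whose digraph contains a strongly connected relation is efficient. -/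
lemma efficient_of_strong {n : ℕ} (A : Matrix (Fin n) (Fin n) ℝ)
    (w : Fin n → ℝ) (hw : ∀ i, 0 < w i) (R : Fin n → Fin n → Prop)
    (hR : ∀ i j, ReflTransGen R i j) (hRw : ∀ i j, R i j → A i j < w i / w j) :
    Efficient A w := by
  intro v hv h
  have step : ∀ i j, R i j → v i / w i ≤ v j / w j := by
    intro i j hij
    have h1 := hRw i j hij
    have h2 := h i j
    rw [abs_of_pos (by linarith : 0 < w i / w j - A i j)] at h2
    have h3 : v i / v j ≤ w i / w j := by linarith [le_abs_self (v i / v j - A i j)]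
    rw [div_le_div_iff₀ (hv j) (hw j)] at h3
    rw [div_le_div_iff₀ (hw i) (hw j)]
    linarith
  have mono : ∀ i j, v i / w i ≤ v j / w j := by
    intro i j
    induction hR i j with
    | refl => exact le_rfl
    | tail _ hbc ih => exact ih.trans (step _ _ hbc)
  rcases isEmpty_or_nonempty (Fin n) with he | ⟨⟨i₀⟩⟩
  · exact ⟨1, one_pos, funext fun i => (he.false i).elim⟩
  · refine ⟨v i₀ / w i₀, div_pos (hv _) (hw _), funext fun i => ?_⟩
    rw [le_antisymm (mono i₀ i) (mono i i₀), div_mul_cancel₀ _ (hw i).ne']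

/-- If `w` is efficient for `A` and `D(A,w)` has no zero off-diagonal entries, then
every sufficiently small positive perturbation of `w` is also efficient for `A`. -/
theorem stmt_17 {n : ℕ} (A : Matrix (Fin n) (Fin n) ℝ) (hA : Reciprocal A)
    (w : Fin n → ℝ) (hw : ∀ i, 0 < w i) (hweff : Efficient A w)
    (hD : ∀ i j, i ≠ j → w i / w j ≠ A i j) :
    ∃ ε : ℝ, 0 < ε ∧ ∀ w' : Fin n → ℝ, (∀ i, 0 < w' i) →
      (∀ i, |w' i - w i| < ε) → Efficient A w' := by
  have hs := strong_of_efficient A hA w hw hweff hD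
  have hev : ∀ᶠ w' in 𝓝 w, ∀ k l, A k l < w k / w l → A k l < w' k / w' l := by
    rw [eventually_all]
    intro k
    rw [eventually_all]
    intro l
    by_cases h : A k l < w k / w l
    · have hc : Tendsto (fun u : Fin n → ℝ => u k / u l) (𝓝 w) (𝓝 (w k / w l)) :=
        ((continuous_apply k).tendsto w).div ((continuous_apply l).tendsto w) (hw l).ne'
      filter_upwards [hc.eventually (lt_mem_nhds h)] with u hu _ using hu
    · exact Eventually.of_forall fun t h' => absurd h' h
  obtain ⟨ε, hε, H⟩ := Metric.eventually_nhds_iff.mp hev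
  refine ⟨ε, hε, fun w' hw' hd => ?_⟩
  exact efficient_of_strong A w' hw' _ hs (H ((dist_pi_lt_iff hε).mpr fun i => by
    rw [Real.dist_eq]
    exact hd i))
end

section
/- Let A be the 5-by-5 reciprocal matrix with rows (1, 1, 9, 4, 1/2), (1, 1, 1, 4, 3), (1/9, 1, 1, 1, 1/3), (1/4, 1/4, 1, 1, 2), (2, 1/3, 3, 1/2, 1). Then for every w_5 with 3/8 ≤ w_5 ≤ 6, the vector (3, 2, 1, 3/4, w_5) is efficient for A; moreover, these are the only efficient vectors for A with first four entries (3, 2, 1, 3/4). -/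
lemma edge_aux {a x y p q : ℝ} (hy : 0 < y) (hq : 0 < q) (h : a ≤ p / q)
    (H : |x / y - a| ≤ |p / q - a|) : x * q ≤ p * y := by
  rw [abs_of_nonneg (sub_nonneg.2 h)] at H
  have h2 : x / y ≤ p / q := by linarith [le_abs_self (x / y - a)]
  rwa [div_le_div_iff₀ hy hq] at h2

lemma abs_aux_hi {a x y : ℝ} (h1 : a ≤ x) (h2 : x ≤ y) : |x - a| ≤ |y - a| := by
  rw [abs_of_nonneg (by linarith), abs_of_nonneg (by linarith)]; linarith

lemma abs_aux_lo {a x y : ℝ} (h1 : x ≤ a) (h2 : y ≤ x) : |x - a| ≤ |y - a| := by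
  rw [abs_of_nonpos (by linarith), abs_of_nonpos (by linarith)]; linarith

/-- For the given 5-by-5 reciprocal matrix, the vector `(3, 2, 1, 3/4, w₅)` is
efficient exactly when `3/8 ≤ w₅ ≤ 6`; these are the only efficient vectors with
first four entries `(3, 2, 1, 3/4)`. -/
theorem stmt_19 (A : Matrix (Fin 5) (Fin 5) ℝ)
    (hA : A = Matrix.of
      ![![1, 1, 9, 4, 1 / 2],
        ![1, 1, 1, 4, 3],
        ![1 / 9, 1, 1, 1, 1 / 3],
        ![1 / 4, 1 / 4, 1, 1, 2],
        ![2, 1 / 3, 3, 1 / 2, 1]])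
    (w5 : ℝ) (hw5 : 0 < w5) :
    Efficient A ![3, 2, 1, 3 / 4, w5] ↔ (3 / 8 ≤ w5 ∧ w5 ≤ 6) := by
  subst hA
  constructor
  · intro h
    constructor
    · by_contra! hlt
      obtain ⟨c, hc, hv⟩ := h ![3, 2, 1, 3 / 4, 3 / 8]
        (by intro i; fin_cases i <;> norm_num) (by
          intro i j
          fin_cases i <;> fin_cases j <;>
            simp only [Matrix.of_apply, Fin.zero_eta, Fin.mk_one, Fin.reduceFinMk,
              Matrix.cons_val, Matrix.cons_val_zero, Matrix.cons_val_one] <;>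
          first
          | exact le_rfl
          | (rw [div_self hw5.ne']; norm_num; done)
          | (apply abs_aux_hi
             · norm_num; done
             · gcongr; done)
          | (apply abs_aux_lo
             · norm_num; done
             · gcongr; done))
      have h0 := congrFun hv 0
      have h4 := congrFun hv 4
      simp at h0 h4
      subst h0
      linarith
    · by_contra! hlt
      obtain ⟨c, hc, hv⟩ := h ![3, 2, 1, 3 / 4, 6]
        (by intro i; fin_cases i <;> norm_num) (by
          intro i j
          fin_cases i <;> fin_cases j <;>
            simp only [Matrix.of_apply, Fin.zero_eta, Fin.mk_one, Fin.reduceFinMk,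
              Matrix.cons_val, Matrix.cons_val_zero, Matrix.cons_val_one] <;>
          first
          | exact le_rfl
          | (rw [div_self hw5.ne']; norm_num; done)
          | (apply abs_aux_hi
             · norm_num; done
             · gcongr; done)
          | (apply abs_aux_lo
             · norm_num; done
             · gcongr; done))
      have h0 := congrFun hv 0
      have h4 := congrFun hv 4
      simp at h0 h4
      subst h0
      linarith
  · rintro ⟨hlo, hhi⟩ v hv H
    have e01 := edge_aux (hv 1) (by simp <;> norm_num) (by simp <;> norm_num) (H 0 1)
    have e12 := edge_aux (hv 2) (by simp <;> norm_num) (by simp <;> norm_num) (H 1 2)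
    have e20 := edge_aux (hv 0) (by simp <;> norm_num) (by simp <;> norm_num) (H 2 0)
    have e03 := edge_aux (hv 3) (by simp <;> norm_num) (by simp <;> norm_num) (H 0 3)
    have e30 := edge_aux (hv 0) (by simp <;> norm_num) (by simp <;> norm_num) (H 3 0)
    have e04 := edge_aux (hv 4) (by simpa using hw5)
      (by simp; rw [le_div_iff₀ hw5]; linarith) (H 0 4)
    have e43 := edge_aux (hv 3) (by simp)
      (by simp; linarith) (H 4 3)
    simp at e01 e12 e20 e03 e30 e04 e43
    have h3 : v 3 = v 0 / 4 := by linarith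
    refine ⟨v 0 / 3, by linarith [hv 0], ?_⟩
    funext i
    fin_cases i <;> simp
    · linarith
    · linarith
    · linarith
    · rw [h3] at e43
      nlinarith
end
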